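/- Let λ, β, σ² > 0 and B > 1. Let f: ℝ^d → ℝ satisfy |f(θ)| ≤ σ² log(B)/4 for all θ, let F(θ) = f(θ) + (λ/2)‖θ‖² be differentiable with (λ+β)-Lipschitz gradient, let θ* be a global minimizer of F, and let π be the Gibbs probability measure with density proportional to e^{−F/σ²}. Then ∫ F dπ − F(θ*) ≤ (dσ²/2) · ( log((β+λ)/λ) + √B ). -/

import Mathlib

open MeasureTheory

/-- The Gibbs probability measure on `ℝ^d` with potential `F` and noise parameter `σ²`:
density `e^{−F(θ)/σ²} / ∫ e^{−F/σ²} dθ` with respect to Lebesgue measure. -/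
noncomputable def gibbs {d : ℕ} (σ2 : ℝ) (F : EuclideanSpace ℝ (Fin d) → ℝ) :
    Measure (EuclideanSpace ℝ (Fin d)) :=
  (ENNReal.ofReal (∫ θ, Real.exp (-(F θ) / σ2)))⁻¹ •
    volume.withDensity (fun θ => ENNReal.ofReal (Real.exp (-(F θ) / σ2)))

/-! For the normalised potential `V = F/σ²` write `V = u + b‖·‖²` with `u` bounded. The Gibbs
measure `π ∝ e^{-V}` is the tilting by `-u` of the Gaussian `γ ∝ e^{-b‖·‖²}`. Two estimates bound
the mean of `V`. The density of `π` with respect to `γ` is at most `e^{osc u}`, so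
`b ∫ ‖x‖² dπ ≤ (d/2) e^{osc u}`. By Jensen's inequality `∫ u dπ ≤ log ∫ e^u dπ`, which is the log
of the ratio of the partition functions of `γ` and `π`; the latter is bounded below because
smoothness puts `V` under the parabola `V a + c‖x - a‖²` at its minimizer `a`, so that this ratio is
at most `e^{V a} (c/b)^{d/2}`. -/

section Smoothness

theorem norm_sub_sub_fderiv_apply_le {E G : Type*} [NormedAddCommGroup E] [NormedSpace ℝ E]
    [NormedAddCommGroup G] [NormedSpace ℝ G] {F : E → G} {L : ℝ} {a : E}
    (hF : Differentiable ℝ F) (hL : ∀ x, ‖fderiv ℝ F x - fderiv ℝ F a‖ ≤ L * ‖x - a‖) (x : E) :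
    ‖F x - F a - fderiv ℝ F a (x - a)‖ ≤ L / 2 * ‖x - a‖ ^ 2 := by
  set r : ℝ → G := fun t => F (a + t • (x - a)) - F a - t • fderiv ℝ F a (x - a)
  have hline (t : ℝ) : HasDerivAt (fun t : ℝ => a + t • (x - a)) (x - a) t := by
    simpa using ((hasDerivAt_id t).smul_const (x - a)).const_add a
  have hr (t : ℝ) :
      HasDerivAt r ((fderiv ℝ F (a + t • (x - a)) - fderiv ℝ F a) (x - a)) t := by
    have hlin : HasDerivAt (fun t : ℝ => t • fderiv ℝ F a (x - a)) (fderiv ℝ F a (x - a)) t := by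
      simpa using (hasDerivAt_id t).smul_const (fderiv ℝ F a (x - a))
    exact (((hF _).hasFDerivAt.comp_hasDerivAt t (hline t)).sub_const _).sub hlin
  have hparabola (t : ℝ) : HasDerivAt (fun t : ℝ => L / 2 * ‖x - a‖ ^ 2 * t ^ 2)
      (L * t * ‖x - a‖ ^ 2) t :=
    ((hasDerivAt_pow 2 t).const_mul _).congr_deriv (by push_cast; ring)
  have hbound (t : ℝ) (ht : t ∈ Set.Ico (0 : ℝ) 1) :
      ‖(fderiv ℝ F (a + t • (x - a)) - fderiv ℝ F a) (x - a)‖ ≤ L * t * ‖x - a‖ ^ 2 := by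
    calc _ ≤ L * ‖a + t • (x - a) - a‖ * ‖x - a‖ :=
          ContinuousLinearMap.le_of_opNorm_le _ (hL _) _
      _ = L * t * ‖x - a‖ ^ 2 := by
          rw [add_sub_cancel_left, norm_smul, Real.norm_of_nonneg ht.1]; ring
  have hr_one := image_norm_le_of_norm_deriv_right_le_deriv_boundary
    (fun t _ => (hr t).continuousAt.continuousWithinAt) (fun t _ => (hr t).hasDerivWithinAt)
    (by simp [r]) hparabola hbound (Set.right_mem_Icc.2 zero_le_one)
  simpa [r] using hr_one

theorem le_add_mul_sq_norm_sub_of_isLocalMin {E : Type*} [NormedAddCommGroup E]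
    [InnerProductSpace ℝ E] [CompleteSpace E] {F : E → ℝ} {L : ℝ} {a : E}
    (hF : Differentiable ℝ F) (hL : ∀ x, ‖gradient F x - gradient F a‖ ≤ L * ‖x - a‖)
    (ha : IsLocalMin F a) (x : E) : F x ≤ F a + L / 2 * ‖x - a‖ ^ 2 := by
  have hfderiv (x : E) : ‖fderiv ℝ F x - fderiv ℝ F a‖ ≤ L * ‖x - a‖ := by
    simpa only [gradient, ← map_sub, LinearIsometryEquiv.norm_map] using hL x
  have htaylor := norm_sub_sub_fderiv_apply_le hF hfderiv x
  rw [ha.fderiv_eq_zero, zero_apply, sub_zero] at htaylor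
  linarith [Real.le_norm_self (F x - F a)]

end Smoothness

section Tilting

variable {α : Type*} [MeasurableSpace α] {μ : Measure α}

theorem integral_le_log_integral_exp [IsProbabilityMeasure μ] {u : α → ℝ} (hu : Integrable u μ)
    (hexp : Integrable (fun x => Real.exp (u x)) μ) :
    ∫ x, u x ∂μ ≤ Real.log (∫ x, Real.exp (u x) ∂μ) := by
  rw [Real.le_log_iff_exp_le (integral_exp_pos hexp)]
  exact convexOn_exp.map_integral_le Real.continuous_exp.continuousOn isClosed_univ
    (ae_of_all _ fun _ => Set.mem_univ _) hu hexp

theorem integral_tilted_le_exp_mul_integral [IsProbabilityMeasure μ] {v h : α → ℝ} {m M : ℝ}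
    (hv : AEMeasurable v μ) (hv_mem : ∀ᵐ x ∂μ, v x ∈ Set.Icc m M) (hh : 0 ≤ᵐ[μ] h)
    (hh_int : Integrable h μ) :
    ∫ x, h x ∂(μ.tilted v) ≤ Real.exp (M - m) * ∫ x, h x ∂μ := by
  have hexp_mem : ∀ᵐ x ∂μ, Real.exp (v x) ∈ Set.Icc (Real.exp m) (Real.exp M) :=
    hv_mem.mono fun x hx => ⟨Real.exp_le_exp.2 hx.1, Real.exp_le_exp.2 hx.2⟩
  have hmass : Real.exp m ≤ ∫ x, Real.exp (v x) ∂μ := by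
    simpa using integral_mono_ae (integrable_const (Real.exp m))
      (Integrable.of_mem_Icc _ _ hv.exp hexp_mem) (hexp_mem.mono fun x hx => hx.1)
  rw [integral_tilted, ← integral_const_mul]
  refine integral_mono_of_nonneg (hh.mono fun x hx => ?_) (hh_int.const_mul _) ?_
  · exact smul_nonneg (by positivity) hx
  · filter_upwards [hh, hexp_mem] with x hx hvx
    rw [smul_eq_mul, Real.exp_sub]
    exact mul_le_mul_of_nonneg_right
      (div_le_div₀ (Real.exp_pos _).le hvx.2 (Real.exp_pos _) hmass) hx

end Tilting

section Gaussian

variable {E : Type*} [NormedAddCommGroup E] [NormedSpace ℝ E] [FiniteDimensional ℝ E]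
  [MeasurableSpace E] [BorelSpace E] (μ : Measure E) [μ.IsAddHaarMeasure] {b c : ℝ}

theorem integrable_norm_pow_mul_exp_neg_mul_sq_norm (hb : 0 < b) (n : ℕ) :
    Integrable (fun x : E => ‖x‖ ^ n * Real.exp (-b * ‖x‖ ^ 2)) μ := by
  rcases subsingleton_or_nontrivial E with hE | hE
  · exact (by fun_prop : Continuous _).integrable_of_hasCompactSupport
      (HasCompactSupport.of_compactSpace _)
  rw [integrable_fun_norm_addHaar μ (f := fun r => r ^ n * Real.exp (-b * r ^ 2))]
  have hexponent : (-1 : ℝ) < (Module.finrank ℝ E - 1 + n : ℕ) := by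
    have : (0 : ℝ) ≤ (Module.finrank ℝ E - 1 + n : ℕ) := Nat.cast_nonneg _
    linarith
  refine (integrableOn_rpow_mul_exp_neg_mul_sq hb hexponent).congr_fun (fun r _ => ?_)
    measurableSet_Ioi
  simp only [Real.rpow_natCast, pow_add, smul_eq_mul, mul_assoc]

theorem integrable_exp_neg_mul_sq_norm (hb : 0 < b) :
    Integrable (fun x : E => Real.exp (-b * ‖x‖ ^ 2)) μ := by
  simpa using integrable_norm_pow_mul_exp_neg_mul_sq_norm μ hb 0

theorem integral_Ioi_pow_mul_exp_neg_mul_sq (hb : 0 < b) (n : ℕ) :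
    ∫ r in Set.Ioi (0 : ℝ), r ^ n * Real.exp (-b * r ^ 2) =
      b ^ (-((n : ℝ) + 1) / 2) * (1 / 2) * Real.Gamma (((n : ℝ) + 1) / 2) := by
  have h := integral_rpow_mul_exp_neg_mul_rpow (p := 2) (q := n) two_pos
    (by linarith [n.cast_nonneg (α := ℝ)]) hb
  simpa only [Real.rpow_natCast, Real.rpow_two] using h

theorem integral_sq_norm_mul_exp_neg_mul_sq_norm (hb : 0 < b) :
    ∫ x : E, ‖x‖ ^ 2 * Real.exp (-b * ‖x‖ ^ 2) ∂μ =
      Module.finrank ℝ E / (2 * b) * ∫ x : E, Real.exp (-b * ‖x‖ ^ 2) ∂μ := by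
  rcases subsingleton_or_nontrivial E with hE | hE
  · simp [Subsingleton.elim _ (0 : E), Module.finrank_zero_of_subsingleton]
  obtain ⟨k, hk⟩ : ∃ k, Module.finrank ℝ E = k + 1 :=
    Nat.exists_eq_succ_of_ne_zero Module.finrank_pos.ne'
  have hradial : ∫ r in Set.Ioi (0 : ℝ), r ^ (k + 2) * Real.exp (-b * r ^ 2) =
      (k + 1) / (2 * b) * ∫ r in Set.Ioi (0 : ℝ), r ^ k * Real.exp (-b * r ^ 2) := by
    rw [integral_Ioi_pow_mul_exp_neg_mul_sq hb, integral_Ioi_pow_mul_exp_neg_mul_sq hb]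
    have hΓ : Real.Gamma (((k + 2 : ℕ) + 1 : ℝ) / 2) =
        (k + 1) / 2 * Real.Gamma ((k + 1) / 2) := by
      rw [← Real.Gamma_add_one (by positivity)]; push_cast; ring_nf
    have hpow : b ^ (-((k + 2 : ℕ) + 1 : ℝ) / 2) = b ^ (-((k : ℝ) + 1) / 2) / b := by
      rw [← Real.rpow_sub_one hb.ne']; push_cast; ring_nf
    rw [hΓ, hpow]; field_simp
  rw [integral_fun_norm_addHaar μ (fun r => r ^ 2 * Real.exp (-b * r ^ 2)),
    integral_fun_norm_addHaar μ (fun r => Real.exp (-b * r ^ 2)), hk]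
  simp only [Nat.add_sub_cancel, smul_eq_mul, nsmul_eq_mul, ← mul_assoc, ← pow_add, hradial]
  push_cast
  ring

theorem integral_exp_neg_mul_sq_norm_eq_rpow_mul (hb : 0 < b) (hc : 0 < c) :
    ∫ x : E, Real.exp (-b * ‖x‖ ^ 2) ∂μ =
      (c / b) ^ (Module.finrank ℝ E / 2 : ℝ) * ∫ x : E, Real.exp (-c * ‖x‖ ^ 2) ∂μ := by
  have hscale := Measure.integral_comp_smul μ (fun x : E => Real.exp (-c * ‖x‖ ^ 2)) √(b / c)
  have hsq (x : E) : -c * ‖√(b / c) • x‖ ^ 2 = -b * ‖x‖ ^ 2 := by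
    rw [norm_smul, mul_pow, Real.norm_eq_abs, sq_abs, Real.sq_sqrt (by positivity)]
    field_simp
  have hfactor : |(√(b / c) ^ Module.finrank ℝ E)⁻¹| = (c / b) ^ (Module.finrank ℝ E / 2 : ℝ) := by
    rw [abs_of_nonneg (by positivity), ← inv_pow, ← Real.sqrt_inv, inv_div, Real.sqrt_eq_rpow,
      ← Real.rpow_mul_natCast (by positivity), one_div_mul_eq_div]
  simpa only [hsq, hfactor, smul_eq_mul] using hscale

theorem integral_sq_norm_tilted_neg_mul_sq_norm (hb : 0 < b) :
    ∫ x : E, ‖x‖ ^ 2 ∂(μ.tilted fun x => -b * ‖x‖ ^ 2) = Module.finrank ℝ E / (2 * b) := by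
  have hpos : 0 < ∫ x : E, Real.exp (-b * ‖x‖ ^ 2) ∂μ :=
    integral_exp_pos (integrable_exp_neg_mul_sq_norm μ hb)
  simp only [integral_tilted, smul_eq_mul, div_mul_eq_mul_div (Real.exp _), integral_div,
    mul_comm (Real.exp _), integral_sq_norm_mul_exp_neg_mul_sq_norm μ hb]
  exact mul_div_cancel_right₀ _ hpos.ne'

end Gaussian

section PerturbedGaussian

variable {E : Type*} [NormedAddCommGroup E] [NormedSpace ℝ E] [FiniteDimensional ℝ E]
  [MeasurableSpace E] [BorelSpace E] {μ : Measure E} [μ.IsAddHaarMeasure] {b c m M : ℝ}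
  {V : E → ℝ}

theorem integrable_norm_pow_mul_exp_neg_of_sub_sq_norm_mem_Icc (hb : 0 < b)
    (hV : AEMeasurable V μ) (hu : ∀ x, V x - b * ‖x‖ ^ 2 ∈ Set.Icc m M) (n : ℕ) :
    Integrable (fun x => ‖x‖ ^ n * Real.exp (-V x)) μ := by
  refine ((integrable_norm_pow_mul_exp_neg_mul_sq_norm μ hb n).const_mul (Real.exp (-m))).mono'
    (AEMeasurable.mul (by fun_prop) hV.neg.exp).aestronglyMeasurable (ae_of_all _ fun x => ?_)
  have hexp : Real.exp (-V x) ≤ Real.exp (-m) * Real.exp (-b * ‖x‖ ^ 2) := by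
    rw [← Real.exp_add, Real.exp_le_exp]
    linarith [(hu x).1]
  rw [Real.norm_of_nonneg (by positivity), mul_left_comm]
  gcongr

theorem integrable_exp_neg_of_sub_sq_norm_mem_Icc (hb : 0 < b) (hV : AEMeasurable V μ)
    (hu : ∀ x, V x - b * ‖x‖ ^ 2 ∈ Set.Icc m M) :
    Integrable (fun x => Real.exp (-V x)) μ := by
  simpa using integrable_norm_pow_mul_exp_neg_of_sub_sq_norm_mem_Icc hb hV hu 0

theorem tilted_neg_eq_tilted_neg_sq_norm_tilted (hb : 0 < b) (V : E → ℝ) :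
    μ.tilted (fun x => -V x) =
      (μ.tilted fun x => -b * ‖x‖ ^ 2).tilted fun x => -(V x - b * ‖x‖ ^ 2) := by
  rw [tilted_tilted (integrable_exp_neg_mul_sq_norm μ hb)]
  congr 1 with x
  simp only [Pi.add_apply]
  ring

theorem integrable_sq_norm_tilted_neg (hb : 0 < b) (hV : AEMeasurable V μ)
    (hu : ∀ x, V x - b * ‖x‖ ^ 2 ∈ Set.Icc m M) :
    Integrable (fun x => ‖x‖ ^ 2) (μ.tilted fun x => -V x) := by
  simpa only [integrable_tilted_iff (integrable_exp_neg_of_sub_sq_norm_mem_Icc hb hV hu),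
    smul_eq_mul, mul_comm (Real.exp _)] using
    integrable_norm_pow_mul_exp_neg_of_sub_sq_norm_mem_Icc hb hV hu 2

theorem integral_sq_norm_tilted_neg_le (hb : 0 < b) (hV : AEMeasurable V μ)
    (hu : ∀ x, V x - b * ‖x‖ ^ 2 ∈ Set.Icc m M) :
    ∫ x, ‖x‖ ^ 2 ∂(μ.tilted fun x => -V x) ≤
      Real.exp (M - m) * (Module.finrank ℝ E / (2 * b)) := by
  rw [tilted_neg_eq_tilted_neg_sq_norm_tilted hb]
  have hgauss := integrable_exp_neg_mul_sq_norm μ hb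
  have : IsProbabilityMeasure (μ.tilted fun x => -b * ‖x‖ ^ 2) := isProbabilityMeasure_tilted hgauss
  have hac := tilted_absolutelyContinuous μ fun x => -b * ‖x‖ ^ 2
  have hsq : Integrable (fun x => ‖x‖ ^ 2) (μ.tilted fun x => -b * ‖x‖ ^ 2) := by
    simpa only [integrable_tilted_iff hgauss, smul_eq_mul, mul_comm (Real.exp _)] using
      integrable_norm_pow_mul_exp_neg_mul_sq_norm μ hb 2
  have hu_neg (x : E) : -(V x - b * ‖x‖ ^ 2) ∈ Set.Icc (-M) (-m) :=
    ⟨neg_le_neg (hu x).2, neg_le_neg (hu x).1⟩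
  have hmoment := integral_tilted_le_exp_mul_integral ((hV.mono_ac hac).sub (by fun_prop)).neg
    (ae_of_all _ hu_neg) (ae_of_all _ fun x => sq_nonneg ‖x‖) hsq
  rwa [neg_sub_neg, integral_sq_norm_tilted_neg_mul_sq_norm μ hb] at hmoment

theorem exp_neg_mul_integral_exp_le_integral_exp_neg {a : E} (hc : 0 < c)
    (hV : Integrable (fun x => Real.exp (-V x)) μ) (ha : ∀ x, V x ≤ V a + c * ‖x - a‖ ^ 2) :
    Real.exp (-V a) * ∫ x : E, Real.exp (-c * ‖x‖ ^ 2) ∂μ ≤ ∫ x, Real.exp (-V x) ∂μ := by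
  rw [← integral_sub_right_eq_self (fun x : E => Real.exp (-c * ‖x‖ ^ 2)) a, ← integral_const_mul]
  refine integral_mono (((integrable_exp_neg_mul_sq_norm μ hc).comp_sub_right a).const_mul _) hV
    fun x => ?_
  simp only [← Real.exp_add, Real.exp_le_exp]
  linarith [ha x]

theorem log_integral_exp_div_integral_exp_neg_le {a : E} (hb : 0 < b) (hc : 0 < c)
    (hV : Integrable (fun x => Real.exp (-V x)) μ) (ha : ∀ x, V x ≤ V a + c * ‖x - a‖ ^ 2) :
    Real.log ((∫ x : E, Real.exp (-b * ‖x‖ ^ 2) ∂μ) / ∫ x, Real.exp (-V x) ∂μ) ≤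
      V a + Module.finrank ℝ E / 2 * Real.log (c / b) := by
  have hgauss : 0 < ∫ x : E, Real.exp (-c * ‖x‖ ^ 2) ∂μ :=
    integral_exp_pos (integrable_exp_neg_mul_sq_norm μ hc)
  have hZ : 0 < ∫ x, Real.exp (-V x) ∂μ := integral_exp_pos hV
  have hlower := Real.log_le_log (by positivity)
    (exp_neg_mul_integral_exp_le_integral_exp_neg hc hV ha)
  rw [Real.log_mul (Real.exp_pos _).ne' hgauss.ne', Real.log_exp] at hlower
  rw [integral_exp_neg_mul_sq_norm_eq_rpow_mul μ hb hc, Real.log_div (by positivity) hZ.ne',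
    Real.log_mul (by positivity) hgauss.ne', Real.log_rpow (by positivity)]
  linarith

theorem integral_sub_sq_norm_tilted_neg_le (hb : 0 < b) (hV : AEMeasurable V μ)
    (hu : ∀ x, V x - b * ‖x‖ ^ 2 ∈ Set.Icc m M) :
    ∫ x, (V x - b * ‖x‖ ^ 2) ∂(μ.tilted fun x => -V x) ≤
      Real.log ((∫ x : E, Real.exp (-b * ‖x‖ ^ 2) ∂μ) / ∫ x, Real.exp (-V x) ∂μ) := by
  have hexp := integrable_exp_neg_of_sub_sq_norm_mem_Icc hb hV hu
  have : IsProbabilityMeasure (μ.tilted fun x => -V x) := isProbabilityMeasure_tilted hexp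
  have hu_meas : AEMeasurable (fun x => V x - b * ‖x‖ ^ 2) (μ.tilted fun x => -V x) :=
    (hV.sub (by fun_prop)).mono_ac (tilted_absolutelyContinuous μ _)
  have hu_exp : Integrable (fun x => Real.exp (V x - b * ‖x‖ ^ 2)) (μ.tilted fun x => -V x) :=
    Integrable.of_mem_Icc (Real.exp m) (Real.exp M) hu_meas.exp
      (ae_of_all _ fun x => ⟨Real.exp_le_exp.2 (hu x).1, Real.exp_le_exp.2 (hu x).2⟩)
  have hjensen := integral_le_log_integral_exp (Integrable.of_mem_Icc m M hu_meas (ae_of_all _ hu))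
    hu_exp
  have hcancel (x : E) : -V x + (V x - b * ‖x‖ ^ 2) = -b * ‖x‖ ^ 2 := by ring
  simpa only [integral_exp_tilted, Pi.add_apply, hcancel] using hjensen

theorem integral_tilted_neg_sub_le {a : E} (hb : 0 < b) (hc : 0 < c) (hV : AEMeasurable V μ)
    (hu : ∀ x, V x - b * ‖x‖ ^ 2 ∈ Set.Icc m M) (ha : ∀ x, V x ≤ V a + c * ‖x - a‖ ^ 2) :
    (∫ x, V x ∂(μ.tilted fun x => -V x)) - V a ≤
      Module.finrank ℝ E / 2 * (Real.log (c / b) + Real.exp (M - m)) := by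
  have hexp := integrable_exp_neg_of_sub_sq_norm_mem_Icc hb hV hu
  have : IsProbabilityMeasure (μ.tilted fun x => -V x) := isProbabilityMeasure_tilted hexp
  have hu_int : Integrable (fun x => V x - b * ‖x‖ ^ 2) (μ.tilted fun x => -V x) :=
    Integrable.of_mem_Icc m M
      ((hV.sub (by fun_prop)).mono_ac (tilted_absolutelyContinuous μ _)) (ae_of_all _ hu)
  have hsplit : ∫ x, V x ∂(μ.tilted fun x => -V x) =
      (∫ x, (V x - b * ‖x‖ ^ 2) ∂(μ.tilted fun x => -V x)) +
        b * ∫ x, ‖x‖ ^ 2 ∂(μ.tilted fun x => -V x) := by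
    rw [← integral_const_mul,
      ← integral_add hu_int ((integrable_sq_norm_tilted_neg hb hV hu).const_mul b)]
    simp only [sub_add_cancel]
  have hperturbation := (integral_sub_sq_norm_tilted_neg_le hb hV hu).trans
    (log_integral_exp_div_integral_exp_neg_le hb hc hexp ha)
  have hmoment := mul_le_mul_of_nonneg_left (integral_sq_norm_tilted_neg_le hb hV hu) hb.le
  have hcancel : b * (Real.exp (M - m) * (Module.finrank ℝ E / (2 * b))) =
      Module.finrank ℝ E / 2 * Real.exp (M - m) := by
    field_simp
  linarith

end PerturbedGaussian

section Gibbs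

theorem gibbs_eq_tilted {d : ℕ} {σ2 : ℝ} {F : EuclideanSpace ℝ (Fin d) → ℝ}
    (hF : Integrable fun θ => Real.exp (-(F θ) / σ2)) :
    gibbs σ2 F = volume.tilted fun θ => -(F θ) / σ2 := by
  have hZ : 0 < ∫ θ, Real.exp (-(F θ) / σ2) := integral_exp_pos hF
  rw [gibbs, Measure.tilted, ← withDensity_smul' _ _ (by simpa using hZ)]
  congr 1 with θ
  rw [Pi.smul_apply, smul_eq_mul, ENNReal.ofReal_div_of_pos hZ, ENNReal.div_eq_inv_mul]

variable {E : Type*} [NormedAddCommGroup E] {lam L σ2 B : ℝ} {f F : E → ℝ}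

theorem div_sub_mul_sq_norm_mem_Icc (hσ2 : 0 < σ2) (hf : ∀ θ, |f θ| ≤ σ2 * Real.log B / 4)
    (hF : ∀ θ, F θ = f θ + lam / 2 * ‖θ‖ ^ 2) (θ : E) :
    F θ / σ2 - lam / (2 * σ2) * ‖θ‖ ^ 2 ∈ Set.Icc (-(Real.log B / 4)) (Real.log B / 4) := by
  have hf_eq : F θ / σ2 - lam / (2 * σ2) * ‖θ‖ ^ 2 = f θ / σ2 := by
    rw [hF]; field_simp; ring
  rw [hf_eq, Set.mem_Icc, ← abs_le, abs_div, abs_of_pos hσ2, div_le_iff₀ hσ2]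
  linarith [hf θ]

variable [NormedSpace ℝ E] [FiniteDimensional ℝ E] [MeasurableSpace E] [BorelSpace E]
  {μ : Measure E} [μ.IsAddHaarMeasure]

theorem integrable_exp_neg_div_of_abs_le (hlam : 0 < lam) (hσ2 : 0 < σ2)
    (hF_meas : AEMeasurable F μ) (hf : ∀ θ, |f θ| ≤ σ2 * Real.log B / 4)
    (hF : ∀ θ, F θ = f θ + lam / 2 * ‖θ‖ ^ 2) :
    Integrable (fun θ => Real.exp (-(F θ) / σ2)) μ := by
  simpa only [neg_div] using integrable_exp_neg_of_sub_sq_norm_mem_Icc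
    (by positivity) (hF_meas.div_const σ2) (div_sub_mul_sq_norm_mem_Icc hσ2 hf hF)

theorem gibbs_near_optimal_general (hlam : 0 < lam) (hL : 0 < L) (hσ2 : 0 < σ2) (hB : 0 < B)
    (hF_meas : AEMeasurable F μ) (hf : ∀ θ, |f θ| ≤ σ2 * Real.log B / 4)
    (hF : ∀ θ, F θ = f θ + lam / 2 * ‖θ‖ ^ 2) {a : E}
    (ha : ∀ θ, F θ ≤ F a + L / 2 * ‖θ - a‖ ^ 2) :
    (∫ θ, F θ ∂(μ.tilted fun θ => -(F θ) / σ2)) - F a ≤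
      Module.finrank ℝ E * σ2 / 2 * (Real.log (L / lam) + √B) := by
  have ha_div (θ : E) : F θ / σ2 ≤ F a / σ2 + L / (2 * σ2) * ‖θ - a‖ ^ 2 := by
    calc F θ / σ2 ≤ (F a + L / 2 * ‖θ - a‖ ^ 2) / σ2 := by gcongr; exact ha θ
      _ = F a / σ2 + L / (2 * σ2) * ‖θ - a‖ ^ 2 := by field_simp
  have hscaled := integral_tilted_neg_sub_le (by positivity) (by positivity)
    (hF_meas.div_const σ2) (div_sub_mul_sq_norm_mem_Icc hσ2 hf hF) ha_div
  have hratio : L / (2 * σ2) / (lam / (2 * σ2)) = L / lam := by field_simp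
  have hosc : Real.exp (Real.log B / 4 - -(Real.log B / 4)) = √B := by
    rw [Real.sqrt_eq_rpow, Real.rpow_def_of_pos hB]; ring_nf
  simp only [integral_div, hratio, hosc] at hscaled
  simp only [neg_div]
  rw [← sub_div, div_le_iff₀ hσ2] at hscaled
  linarith

end Gibbs

/-- **Near-optimality of Gibbs sampling.** Let `F(θ) = f(θ) + (λ/2)‖θ‖²` with
`|f| ≤ σ² log(B)/4`, `F` differentiable with `(λ+β)`-Lipschitz gradient and global
minimizer `θ*`, and let `π ∝ e^{−F/σ²}` be the Gibbs measure. Then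
`∫ F dπ − F(θ*) ≤ (dσ²/2)(log((β+λ)/λ) + √B)`. -/
theorem gibbs_near_optimal {d : ℕ} {lam β σ2 B : ℝ}
    (hlam : 0 < lam) (hβ : 0 < β) (hσ2 : 0 < σ2) (hB : 1 < B)
    (f : EuclideanSpace ℝ (Fin d) → ℝ)
    (hfbdd : ∀ θ, |f θ| ≤ σ2 * Real.log B / 4)
    (F : EuclideanSpace ℝ (Fin d) → ℝ)
    (hFdef : ∀ θ, F θ = f θ + lam / 2 * ‖θ‖ ^ 2)
    (hFdiff : Differentiable ℝ F)
    (hFlip : ∀ x y, ‖gradient F x - gradient F y‖ ≤ (lam + β) * ‖x - y‖)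
    (θstar : EuclideanSpace ℝ (Fin d)) (hmin : ∀ θ, F θstar ≤ F θ) :
    (∫ θ, F θ ∂(gibbs σ2 F)) - F θstar
      ≤ (d * σ2 / 2) * (Real.log ((β + lam) / lam) + Real.sqrt B) := by
  rw [gibbs_eq_tilted (integrable_exp_neg_div_of_abs_le hlam hσ2
    hFdiff.continuous.aemeasurable hfbdd hFdef), add_comm β]
  simpa only [finrank_euclideanSpace_fin] using
    gibbs_near_optimal_general (μ := volume) hlam (add_pos hlam hβ) hσ2 (one_pos.trans hB)
      hFdiff.continuous.aemeasurable hfbdd hFdef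
      (le_add_mul_sq_norm_sub_of_isLocalMin hFdiff (hFlip · θstar) (.of_forall hmin))
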